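/- Let d > 1 and let X be an ℝ^d-valued random variable with projection Lipschitz constant L_π and radial Lipschitz constant L_θ. Fix R > 0, ε > 0, δ > 0, and θ, φ ∈ S^{d-1}, and let X^(n) = (X_1,…,X_n) be points of ℝ^d with ‖X_i‖ ≤ R for all i ≤ n. If sup_{t ∈ ℝ} |F_θ(t) − F_{n,θ}(t)| < ε(1+δ)^{-1}, then sup_{t ∈ ℝ} |F_φ(t) − F_{n,φ}(t)| < ε(1+δ)^{-1} + L_θ·|θ−φ| + L_π·R·|θ−φ|. -/

import Mathlib

open MeasureTheory RealInnerProductSpace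

/-- The cdf of the projection of the random variable `X` in the direction `v`:
`F_v(t) = P(⟪X, v⟫ ≤ t)`. -/
noncomputable def projCdf {Ω : Type*} [MeasurableSpace Ω] {d : ℕ} (P : Measure Ω)
    (X : Ω → EuclideanSpace ℝ (Fin d)) (v : EuclideanSpace ℝ (Fin d)) (t : ℝ) : ℝ :=
  (P {ω | ⟪X ω, v⟫ ≤ t}).toReal

/-- The empirical cdf of a sample in the direction `v`:
`F_{n,v}(t) = n⁻¹ · #{i : ⟪Xs i, v⟫ ≤ t}`. -/
noncomputable def empCdf {d n : ℕ} (Xs : Fin n → EuclideanSpace ℝ (Fin d))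
    (v : EuclideanSpace ℝ (Fin d)) (t : ℝ) : ℝ :=
  (n : ℝ)⁻¹ * (Finset.univ.filter (fun i => ⟪Xs i, v⟫ ≤ t)).card

/-!
Rotating the direction from `θ` to `φ` moves the projection of a point of norm at most `R` by at
most `r = R·|θ−φ|`, since a chord is no longer than its arc. Hence `F_{n,φ}(t)` lies between
`F_{n,θ}(t - r)` and `F_{n,θ}(t + r)`, and the Lipschitz continuity of `F_θ` turns this horizontal
shift into a vertical error `L_π·r`. Replacing `F_θ` by `F_φ` costs another `L_θ·|θ−φ|`.
-/

section InnerProductSpace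

variable {E : Type*} [NormedAddCommGroup E] [InnerProductSpace ℝ E] {u v x : E} {R : ℝ}

lemma norm_sub_le_arccos_inner (hu : ‖u‖ = 1) (hv : ‖v‖ = 1) :
    ‖u - v‖ ≤ Real.arccos ⟪u, v⟫ := by
  obtain ⟨hneg, hle⟩ : -1 ≤ ⟪u, v⟫ ∧ ⟪u, v⟫ ≤ 1 := by
    simpa [hu, hv, abs_le] using abs_real_inner_le_norm u v
  refine le_of_sq_le_sq ?_ (Real.arccos_nonneg _)
  calc ‖u - v‖ ^ 2 = 2 * (1 - Real.cos (Real.arccos ⟪u, v⟫)) := by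
        rw [norm_sub_sq_real, hu, hv, Real.cos_arccos hneg hle]
        ring
    _ ≤ Real.arccos ⟪u, v⟫ ^ 2 := by
        linarith [Real.one_sub_sq_div_two_le_cos (x := Real.arccos ⟪u, v⟫)]

lemma abs_inner_sub_inner_le_mul_arccos (hx : ‖x‖ ≤ R) (hu : ‖u‖ = 1) (hv : ‖v‖ = 1) :
    |⟪x, u⟫ - ⟪x, v⟫| ≤ R * Real.arccos ⟪u, v⟫ :=
  calc |⟪x, u⟫ - ⟪x, v⟫| = |⟪x, u - v⟫| := by rw [inner_sub_right]
    _ ≤ ‖x‖ * ‖u - v‖ := abs_real_inner_le_norm x (u - v)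
    _ ≤ R * Real.arccos ⟪u, v⟫ := by
        gcongr
        exacts [(norm_nonneg x).trans hx, norm_sub_le_arccos_inner hu hv]

end InnerProductSpace

lemma abs_sub_le_add_mul_of_shift_le {F G H : ℝ → ℝ} {L c r : ℝ}
    (hF : ∀ s t, |F s - F t| ≤ L * |s - t|) (hFG : ∀ t, |F t - G t| ≤ c) (hr : 0 ≤ r)
    (hGH : ∀ t, G t ≤ H (t + r)) (hHG : ∀ t, H t ≤ G (t + r)) (t : ℝ) :
    |F t - H t| ≤ c + L * r := by
  have hlower : G (t - r) ≤ H t := by simpa using hGH (t - r)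
  have hleft : F t - F (t - r) ≤ L * r := by
    simpa [abs_of_nonneg hr] using (le_abs_self _).trans (hF t (t - r))
  have hright : F (t + r) - F t ≤ L * r := by
    simpa [abs_of_nonneg hr] using (le_abs_self _).trans (hF (t + r) t)
  refine abs_sub_le_iff.2 ⟨?_, ?_⟩
  · linarith [(abs_sub_le_iff.1 (hFG (t - r))).1]
  · linarith [(abs_sub_le_iff.1 (hFG (t + r))).2, hHG t]

section EmpiricalCdf

variable {d n : ℕ} {Xs : Fin n → EuclideanSpace ℝ (Fin d)} {u v : EuclideanSpace ℝ (Fin d)}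

lemma empCdf_nonneg (Xs : Fin n → EuclideanSpace ℝ (Fin d)) (v : EuclideanSpace ℝ (Fin d))
    (t : ℝ) : 0 ≤ empCdf Xs v t := by
  unfold empCdf
  positivity

lemma empCdf_le_one (Xs : Fin n → EuclideanSpace ℝ (Fin d)) (v : EuclideanSpace ℝ (Fin d))
    (t : ℝ) : empCdf Xs v t ≤ 1 := by
  refine inv_mul_le_one_of_le₀ ?_ n.cast_nonneg
  exact_mod_cast (Finset.card_filter_le _ _).trans_eq (Finset.card_fin n)

lemma empCdf_le_empCdf_add {r : ℝ} (h : ∀ i, ⟪Xs i, v⟫ - ⟪Xs i, u⟫ ≤ r) (t : ℝ) :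
    empCdf Xs u t ≤ empCdf Xs v (t + r) := by
  have hsubset : Finset.univ.filter (fun i ↦ ⟪Xs i, u⟫ ≤ t) ⊆
      Finset.univ.filter (fun i ↦ ⟪Xs i, v⟫ ≤ t + r) :=
    Finset.monotone_filter_right _ fun i _ hi ↦ by linarith [h i]
  unfold empCdf
  gcongr

lemma bddAbove_range_abs_projCdf_sub_empCdf {Ω : Type*} [MeasurableSpace Ω] (P : Measure Ω)
    [IsFiniteMeasure P] (X : Ω → EuclideanSpace ℝ (Fin d)) (Xs : Fin n → EuclideanSpace ℝ (Fin d))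
    (v : EuclideanSpace ℝ (Fin d)) :
    BddAbove (Set.range fun t ↦ |projCdf P X v t - empCdf Xs v t|) := by
  refine ⟨max (P.real Set.univ) 1, ?_⟩
  rintro _ ⟨t, rfl⟩
  exact abs_sub_le_of_nonneg_of_le measureReal_nonneg
    ((measureReal_mono (Set.subset_univ _)).trans (le_max_left _ _))
    (empCdf_nonneg Xs v t) ((empCdf_le_one Xs v t).trans (le_max_right _ _))

end EmpiricalCdf

theorem supDist_proj_of_nearby_direction_general {d n : ℕ} {Ω : Type*} [MeasurableSpace Ω]
    (P : Measure Ω) [IsFiniteMeasure P] (X : Ω → EuclideanSpace ℝ (Fin d))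
    {Lpi Lth R : ℝ} {θ φ : EuclideanSpace ℝ (Fin d)} (hθ : ‖θ‖ = 1) (hφ : ‖φ‖ = 1)
    (hLipPi : ∀ s t : ℝ, |projCdf P X θ s - projCdf P X θ t| ≤ Lpi * |s - t|)
    (hLipTh : ∀ t : ℝ, |projCdf P X θ t - projCdf P X φ t| ≤ Lth * Real.arccos ⟪θ, φ⟫)
    (hR : 0 ≤ R) (Xs : Fin n → EuclideanSpace ℝ (Fin d)) (hXs : ∀ i, ‖Xs i‖ ≤ R) :
    (⨆ t : ℝ, |projCdf P X φ t - empCdf Xs φ t|) ≤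
      (⨆ t : ℝ, |projCdf P X θ t - empCdf Xs θ t|) +
        Lth * Real.arccos ⟪θ, φ⟫ + Lpi * R * Real.arccos ⟪θ, φ⟫ := by
  have hshift (i : Fin n) := abs_sub_le_iff.1 (abs_inner_sub_inner_le_mul_arccos (hXs i) hθ hφ)
  have hθφ (t : ℝ) : |projCdf P X θ t - empCdf Xs φ t| ≤
      (⨆ t : ℝ, |projCdf P X θ t - empCdf Xs θ t|) + Lpi * (R * Real.arccos ⟪θ, φ⟫) :=
    abs_sub_le_add_mul_of_shift_le hLipPi
      (le_ciSup (bddAbove_range_abs_projCdf_sub_empCdf P X Xs θ))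
      (mul_nonneg hR (Real.arccos_nonneg _))
      (empCdf_le_empCdf_add fun i ↦ (hshift i).2) (empCdf_le_empCdf_add fun i ↦ (hshift i).1) t
  refine ciSup_le fun t ↦ ?_
  have htriangle := abs_sub_le (projCdf P X φ t) (projCdf P X θ t) (empCdf Xs φ t)
  rw [abs_sub_comm (projCdf P X φ t) (projCdf P X θ t)] at htriangle
  linarith [hLipTh t, hθφ t]

/-- If the sup-distance between `F_θ` and `F_{n,θ}` is less than `ε(1+δ)⁻¹`, then the
sup-distance between `F_φ` and `F_{n,φ}` is less than
`ε(1+δ)⁻¹ + L_θ·|θ−φ| + L_π·R·|θ−φ|`. -/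
theorem supDist_proj_of_nearby_direction {d : ℕ} (hd1 : 1 < d)
    {Ω : Type*} [MeasurableSpace Ω] (P : Measure Ω) [IsProbabilityMeasure P]
    (X : Ω → EuclideanSpace ℝ (Fin d)) (hX : Measurable X)
    (Lpi Lth : ℝ) (hLpi : 0 < Lpi) (hLth : 0 ≤ Lth)
    (hLipPi : ∀ v : EuclideanSpace ℝ (Fin d), ‖v‖ = 1 →
      ∀ s t : ℝ, |projCdf P X v s - projCdf P X v t| ≤ Lpi * |s - t|)
    (hLipTh : ∀ t : ℝ, ∀ u v : EuclideanSpace ℝ (Fin d), ‖u‖ = 1 → ‖v‖ = 1 →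
      |projCdf P X u t - projCdf P X v t| ≤ Lth * Real.arccos ⟪u, v⟫)
    (R ε δ : ℝ) (hR : 0 < R) (hε : 0 < ε) (hδ : 0 < δ)
    (θ φ : EuclideanSpace ℝ (Fin d)) (hθ : ‖θ‖ = 1) (hφ : ‖φ‖ = 1)
    {n : ℕ} (Xs : Fin n → EuclideanSpace ℝ (Fin d)) (hXs : ∀ i, ‖Xs i‖ ≤ R)
    (hsup : (⨆ t : ℝ, |projCdf P X θ t - empCdf Xs θ t|) < ε * (1 + δ)⁻¹) :
    (⨆ t : ℝ, |projCdf P X φ t - empCdf Xs φ t|) <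
      ε * (1 + δ)⁻¹ + Lth * Real.arccos ⟪θ, φ⟫ + Lpi * R * Real.arccos ⟪θ, φ⟫ := by
  linarith [supDist_proj_of_nearby_direction_general P X hθ hφ (hLipPi θ hθ)
    (fun t ↦ hLipTh t θ φ hθ hφ) hR.le Xs hXs]
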